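/- arXiv:2410.00671 — 5 statements merged into one kernel-verified Lean document; each statement's English description precedes it below -/
import Mathlib

section
/- Let L > 0, M > 0, λ > 0 and k ∈ ℝ satisfy |k| ≤ exp(−λL) and M < λ/(1 + exp(2λL)). Then the closed-loop Bastin–Coron system with feedback gain k is exponentially stable in L²: there exist constants C ≥ 1 and μ > 0, depending only on λ, L, M and k, such that every classical solution δ₊, δ₋ of the closed-loop system satisfies ∫₀ᴸ (δ₊(t,x)² + δ₋(t,x)²) dx ≤ C·exp(−μt)·∫₀ᴸ (δ₊(0,x)² + δ₋(0,x)²) dx for all t ≥ 0. -/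
/-!
The proof is a weighted energy (Lyapunov) argument. With `E = exp (λ L)`, put
`a x = exp (λ (2 L - x))`, `b x = exp (λ x)` and `V t = ∫₀ᴸ (a δ₊² + b δ₋²)`.
Differentiating under the integral sign and using the equations, the integrand of `V'` is
`∂ₓ(b δ₋² - a δ₊²) - λ (a δ₊² + b δ₋²) - 2 M (a + b) δ₊ δ₋`.

* The boundary terms are nonpositive: `a L = b L` cancels the contribution at `x = L`, and
  `a 0 * k² ≤ 1 = b 0` because `|k| ≤ exp (-λ L)`.
* Since `a b = E² ≥ 1` and `a + b ≤ 1 + E²` on `[0, L]`, the cross term is at most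
  `M (1 + E²) (a δ₊² + b δ₋²)` (`pointwise_bound`).

So `V' ≤ -μ V` with `μ = λ - M (1 + E²) > 0`, and `1 ≤ a, b ≤ E²` turns the decay of `V` into the
claim with `C = E²`. Differentiation under the integral needs joint continuity of `δ₊, δ₋`, which
follows from continuity of the partial derivatives (`continuousOn_of_partials`).
-/

open MeasureTheory

/-- A classical solution of the Bastin–Coron system with time- and space-derivative
fields `dtp, dxp, dtm, dxm`: the pair `(δ₊, δ₋)` is continuously differentiable on
`[0,∞) × [0,L]` and satisfies `∂ₜδ₊ + ∂ₓδ₊ + M δ₋ = 0`, `∂ₜδ₋ − ∂ₓδ₋ + M δ₊ = 0`. -/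
def IsBastinCoronSolution (L M : ℝ) (δp δm dtp dxp dtm dxm : ℝ → ℝ → ℝ) : Prop :=
  (∀ t ∈ Set.Ici (0 : ℝ), ∀ x ∈ Set.Icc (0 : ℝ) L,
    HasDerivAt (fun s => δp s x) (dtp t x) t ∧
    HasDerivAt (fun y => δp t y) (dxp t x) x ∧
    HasDerivAt (fun s => δm s x) (dtm t x) t ∧
    HasDerivAt (fun y => δm t y) (dxm t x) x) ∧
  ContinuousOn (fun p : ℝ × ℝ => (dtp p.1 p.2, dxp p.1 p.2, dtm p.1 p.2, dxm p.1 p.2))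
    (Set.Ici 0 ×ˢ Set.Icc 0 L) ∧
  (∀ t ∈ Set.Ici (0 : ℝ), ∀ x ∈ Set.Icc (0 : ℝ) L,
    dtp t x + dxp t x + M * δm t x = 0 ∧
    dtm t x - dxm t x + M * δp t x = 0)

open Set

/-- A function whose partial derivatives exist and whose `t`-derivative is jointly continuous is
jointly continuous: it is locally Lipschitz in `t`, uniformly in `x ∈ [0, L]`. -/
lemma continuousOn_of_partials {L : ℝ} {f ft fx : ℝ → ℝ → ℝ}
    (ht : ∀ t ∈ Ici (0 : ℝ), ∀ x ∈ Icc (0 : ℝ) L, HasDerivAt (fun s => f s x) (ft t x) t)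
    (hx : ∀ t ∈ Ici (0 : ℝ), ∀ x ∈ Icc (0 : ℝ) L, HasDerivAt (fun y => f t y) (fx t x) x)
    (hc : ContinuousOn (fun p : ℝ × ℝ => ft p.1 p.2) (Ici 0 ×ˢ Icc 0 L)) :
    ContinuousOn (fun p : ℝ × ℝ => f p.1 p.2) (Ici 0 ×ˢ Icc 0 L) := by
  have key : ∀ T : ℝ, ContinuousOn (fun p : ℝ × ℝ => f p.1 p.2) (Icc 0 T ×ˢ Icc 0 L) := by
    intro T
    obtain ⟨K, hK⟩ := (isCompact_Icc.prod isCompact_Icc).exists_bound_of_continuousOn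
      (hc.mono (prod_mono (show Icc 0 T ⊆ Ici (0 : ℝ) from Icc_subset_Ici_self)
        (Subset.refl (Icc 0 L))))
    refine continuousOn_prod_of_continuousOn_lipschitzOnWith _ K.toNNReal ?_ ?_
    · exact fun t h x hxL => (hx t h.1 x hxL).continuousAt.continuousWithinAt
    · intro x hxL
      refine (convex_Icc 0 T).lipschitzOnWith_of_nnnorm_hasDerivWithin_le
        (f' := fun t => ft t x) (fun t h => (ht t h.1 x hxL).hasDerivWithinAt) ?_
      intro t h
      have := hK (t, x) ⟨h, hxL⟩
      rw [← NNReal.coe_le_coe]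
      exact this.trans (Real.le_coe_toNNReal K)
  rintro ⟨t, x⟩ ⟨h1, h2⟩
  refine (key (t + 1) (t, x) ⟨⟨h1, by simp⟩, h2⟩).mono_of_mem_nhdsWithin ?_
  have hO : IsOpen (Iio (t + 1) ×ˢ (univ : Set ℝ)) := isOpen_Iio.prod isOpen_univ
  filter_upwards [self_mem_nhdsWithin, mem_nhdsWithin_of_mem_nhds
    (hO.mem_nhds (show (t, x) ∈ _ from ⟨by simp, mem_univ _⟩))] with p hp hp'
  exact ⟨⟨hp.1, hp'.1.le⟩, hp.2⟩

lemma continuousOn_slice {L : ℝ} {f : ℝ → ℝ → ℝ}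
    (hc : ContinuousOn (fun p : ℝ × ℝ => f p.1 p.2) (Ici 0 ×ˢ Icc 0 L)) {t : ℝ} (ht : 0 ≤ t) :
    ContinuousOn (f t) (Icc 0 L) :=
  hc.comp (f := fun x => (t, x)) (by fun_prop) (fun _ hx => ⟨ht, hx⟩)

lemma continuousOn_integral {L : ℝ} (hL : 0 < L) {f : ℝ → ℝ → ℝ}
    (hc : ContinuousOn (fun p : ℝ × ℝ => f p.1 p.2) (Ici 0 ×ˢ Icc 0 L)) :
    ContinuousOn (fun t => ∫ x in (0 : ℝ)..L, f t x) (Ici 0) := by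
  -- `f` precomposed with the retraction of the plane onto `[0,∞) × [0,L]` is globally continuous.
  have hg : Continuous (fun p : ℝ × ℝ => f (max p.1 0) (max 0 (min p.2 L))) := by
    refine hc.comp_continuous
      (f := fun p : ℝ × ℝ => (max p.1 0, max 0 (min p.2 L))) (by fun_prop) ?_
    intro p
    exact ⟨mem_Ici.2 (le_max_right _ _), le_max_left _ _, max_le hL.le (min_le_right _ _)⟩
  have hI := intervalIntegral.continuous_parametric_intervalIntegral_of_continuous'
    (f := fun t x => f (max t 0) (max 0 (min x L))) (μ := volume) hg 0 L
  refine hI.continuousOn.congr ?_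
  intro t ht
  refine intervalIntegral.integral_congr fun x hx => ?_
  rw [uIcc_of_le hL.le] at hx
  have h0 : (0 : ℝ) ≤ t := ht
  simp [max_eq_left h0, min_eq_left hx.2, max_eq_right hx.1]

/-- Differentiation under the integral sign at interior times. -/
lemma hasDerivAt_integral_of_partial {L : ℝ} (hL : 0 < L) {f ft : ℝ → ℝ → ℝ}
    (hc : ContinuousOn (fun p : ℝ × ℝ => f p.1 p.2) (Ici 0 ×ˢ Icc 0 L))
    (hct : ContinuousOn (fun p : ℝ × ℝ => ft p.1 p.2) (Ici 0 ×ˢ Icc 0 L))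
    (hd : ∀ t ∈ Ici (0 : ℝ), ∀ x ∈ Icc (0 : ℝ) L, HasDerivAt (fun s => f s x) (ft t x) t)
    {t : ℝ} (ht : 0 < t) :
    HasDerivAt (fun t => ∫ x in (0 : ℝ)..L, f t x) (∫ x in (0 : ℝ)..L, ft t x) t := by
  obtain ⟨K, hK⟩ := (isCompact_Icc.prod isCompact_Icc).exists_bound_of_continuousOn
    (hct.mono (prod_mono (show Icc 0 (t + 1) ⊆ Ici (0 : ℝ) from Icc_subset_Ici_self)
        (Subset.refl (Icc 0 L))))
  have hmem : ∀ x ∈ uIoc 0 L, x ∈ Icc 0 L := by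
    intro x hx
    rw [uIoc_of_le hL.le] at hx
    exact Ioc_subset_Icc_self hx
  have hint : ∀ {g : ℝ → ℝ}, ContinuousOn g (Icc 0 L) → IntervalIntegrable g volume 0 L :=
    fun h => ContinuousOn.intervalIntegrable (by rwa [uIcc_of_le hL.le])
  have hmeas : ∀ {g : ℝ → ℝ}, ContinuousOn g (Icc 0 L) →
      AEStronglyMeasurable g (volume.restrict (uIoc 0 L)) :=
    fun h => (hint h).def'.aestronglyMeasurable
  refine (intervalIntegral.hasDerivAt_integral_of_dominated_loc_of_deriv_le
    (s := Icc 0 (t + 1)) (bound := fun _ => K) (F' := ft)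
    (Icc_mem_nhds ht (by simp)) ?_ (hint (continuousOn_slice hc ht.le))
    (hmeas (continuousOn_slice hct ht.le)) ?_ (by simp) ?_).2
  · filter_upwards [Ioi_mem_nhds ht] with s hs
    exact hmeas (continuousOn_slice hc (le_of_lt hs))
  · exact Filter.Eventually.of_forall fun x hx s hs => hK (s, x) ⟨hs, hmem x hx⟩
  · exact Filter.Eventually.of_forall fun x hx s hs => hd s hs.1 x (hmem x hx)

/-- The cross term is dominated by the weighted energy density: `2 |p q| ≤ a p² + b q²` because
`a b ≥ 1`. -/
lemma pointwise_bound {M S a b p q : ℝ} (hM : 0 ≤ M) (ha : 0 < a) (hb : 0 < b)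
    (hab : 1 ≤ a * b) (hS : a + b ≤ S) :
    -(2 * M * (a + b) * (p * q)) ≤ M * S * (a * p ^ 2 + b * q ^ 2) := by
  have h1 : -(2 * (p * q)) ≤ a * p ^ 2 + b * q ^ 2 := by
    -- Multiplied by `a`, right side minus left side is `(a p + q)² + (a b - 1) q²`.
    have h : 0 ≤ a * (a * p ^ 2 + b * q ^ 2 + 2 * (p * q)) := by
      nlinarith [sq_nonneg (a * p + q), mul_nonneg (sub_nonneg.2 hab) (sq_nonneg q)]
    have := nonneg_of_mul_nonneg_right h ha
    linarith
  have h2 : 0 ≤ a * p ^ 2 + b * q ^ 2 := by positivity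
  calc -(2 * M * (a + b) * (p * q)) = M * (a + b) * (-(2 * (p * q))) := by ring
    _ ≤ M * (a + b) * (a * p ^ 2 + b * q ^ 2) := by gcongr
    _ ≤ M * S * (a * p ^ 2 + b * q ^ 2) := by gcongr

/-- `exp (c - u) + exp u ≤ exp c + 1` for `0 ≤ u ≤ c`, since `(exp u - 1) (exp (c - u) - 1) ≥ 0`. -/
lemma exp_sub_add_exp_le {c u : ℝ} (h0 : 0 ≤ u) (h1 : u ≤ c) :
    Real.exp (c - u) + Real.exp u ≤ 1 + Real.exp c := by
  have e : Real.exp c = Real.exp (c - u) * Real.exp u := by rw [← Real.exp_add]; congr 1; ring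
  have h2 := Real.one_le_exp h0
  have h3 := Real.one_le_exp (sub_nonneg.2 h1)
  rw [e]
  nlinarith [mul_nonneg (sub_nonneg.2 h2) (sub_nonneg.2 h3)]

/-- Density of the Lyapunov functional for the values `p = δ₊`, `q = δ₋` at the point `x`. -/
noncomputable def energyDensity (L lam x p q : ℝ) : ℝ :=
  Real.exp (lam * (2 * L - x)) * p ^ 2 + Real.exp (lam * x) * q ^ 2

/-- The Lyapunov inequality `V' ≤ -(λ - M (1 + exp (2 λ L))) V` at a fixed time: `p, q` are the
profiles of `δ₊, δ₋` and `pt, px, qt, qx` those of their partial derivatives. -/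
lemma energy_dissipation {L M lam k : ℝ} (hL : 0 < L) (hM : 0 < M) (hlam : 0 < lam)
    (hk : |k| ≤ Real.exp (-lam * L)) {p q pt px qt qx : ℝ → ℝ}
    (hp : ∀ x ∈ Icc 0 L, HasDerivAt p (px x) x) (hq : ∀ x ∈ Icc 0 L, HasDerivAt q (qx x) x)
    (cpt : ContinuousOn pt (Icc 0 L)) (cpx : ContinuousOn px (Icc 0 L))
    (cqt : ContinuousOn qt (Icc 0 L)) (cqx : ContinuousOn qx (Icc 0 L))
    (e1 : ∀ x ∈ Icc 0 L, pt x + px x + M * q x = 0)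
    (e2 : ∀ x ∈ Icc 0 L, qt x - qx x + M * p x = 0)
    (h0 : p 0 = k * q 0) (h1 : q L = p L) :
    (∫ x in (0 : ℝ)..L, (Real.exp (lam * (2 * L - x)) * (2 * p x * pt x) +
        Real.exp (lam * x) * (2 * q x * qt x))) ≤
      -(lam - M * (1 + Real.exp (2 * lam * L))) *
        ∫ x in (0 : ℝ)..L, energyDensity L lam x (p x) (q x) := by
  have cp : ContinuousOn p (Icc 0 L) := fun x hx => (hp x hx).continuousAt.continuousWithinAt
  have cq : ContinuousOn q (Icc 0 L) := fun x hx => (hq x hx).continuousAt.continuousWithinAt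
  have hint : ∀ {g : ℝ → ℝ}, ContinuousOn g (Icc 0 L) → IntervalIntegrable g volume 0 L :=
    fun h => ContinuousOn.intervalIntegrable (by rwa [uIcc_of_le hL.le])
  -- `flux = b q² - a p²`, with derivative `flux'`.
  set flux : ℝ → ℝ := fun x =>
    Real.exp (lam * x) * q x ^ 2 - Real.exp (lam * (2 * L - x)) * p x ^ 2 with hflux
  set flux' : ℝ → ℝ := fun x =>
    lam * energyDensity L lam x (p x) (q x) + Real.exp (lam * x) * (2 * q x * qx x)
      - Real.exp (lam * (2 * L - x)) * (2 * p x * px x) with hflux'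
  have cE : ContinuousOn (fun x => energyDensity L lam x (p x) (q x)) (Icc 0 L) := by
    unfold energyDensity; fun_prop
  have cF : ContinuousOn flux' (Icc 0 L) := by
    rw [hflux']; fun_prop
  have hF : ∀ x ∈ Icc 0 L, HasDerivAt flux (flux' x) x := by
    intro x hx
    have ha : HasDerivAt (fun y => Real.exp (lam * (2 * L - y)))
        (Real.exp (lam * (2 * L - x)) * (lam * (-1))) x :=
      (((hasDerivAt_id x).const_sub (2 * L)).const_mul lam).exp
    have hb : HasDerivAt (fun y => Real.exp (lam * y)) (Real.exp (lam * x) * (lam * 1)) x :=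
      ((hasDerivAt_id x).const_mul lam).exp
    refine ((hb.mul ((hq x hx).pow 2)).sub (ha.mul ((hp x hx).pow 2))).congr_deriv ?_
    simp only [hflux', energyDensity, Pi.pow_apply]
    push_cast
    ring
  have hFint : ∫ x in (0 : ℝ)..L, flux' x = flux L - flux 0 :=
    intervalIntegral.integral_eq_sub_of_hasDerivAt
      (fun x hx => hF x (by rwa [uIcc_of_le hL.le] at hx)) (hint cF)
  have hbdry : flux L - flux 0 ≤ 0 := by
    have hL0 : flux L = 0 := by
      simp only [hflux, h1]
      rw [show lam * (2 * L - L) = lam * L by ring, sub_self]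
    have hk2 : Real.exp (lam * (2 * L - 0)) * k ^ 2 ≤ 1 := by
      calc Real.exp (lam * (2 * L - 0)) * k ^ 2
          ≤ Real.exp (lam * (2 * L - 0)) * Real.exp (-lam * L) ^ 2 := by
            rw [← sq_abs k]; gcongr
        _ = 1 := by
            rw [← Real.exp_nat_mul, ← Real.exp_add, ← Real.exp_zero]
            congr 1; push_cast; ring
    have h00 : 0 ≤ flux 0 := by
      simp only [hflux, h0, mul_zero, Real.exp_zero]
      nlinarith [mul_nonneg (sub_nonneg.2 hk2) (sq_nonneg (q 0))]
    linarith
  calc _ ≤ ∫ x in (0 : ℝ)..L, (flux' x + -(lam - M * (1 + Real.exp (2 * lam * L))) *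
            energyDensity L lam x (p x) (q x)) := by
        refine intervalIntegral.integral_mono_on hL.le (hint (by fun_prop))
          (hint (cF.add (cE.const_mul _))) ?_
        intro x hx
        have hab : 1 ≤ Real.exp (lam * (2 * L - x)) * Real.exp (lam * x) := by
          rw [← Real.exp_add]
          exact Real.one_le_exp (by nlinarith [mul_pos hlam hL])
        have hS : Real.exp (lam * (2 * L - x)) + Real.exp (lam * x) ≤
            1 + Real.exp (2 * lam * L) := by
          have := exp_sub_add_exp_le (c := 2 * lam * L) (u := lam * x)
            (mul_nonneg hlam.le hx.1) (by nlinarith [hx.1, hx.2])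
          rwa [show 2 * lam * L - lam * x = lam * (2 * L - x) by ring] at this
        have hpw := pointwise_bound (p := p x) (q := q x) hM.le (Real.exp_pos _) (Real.exp_pos _)
          hab hS
        have hpt : pt x = -px x - M * q x := by linarith [e1 x hx]
        have hqt : qt x = qx x - M * p x := by linarith [e2 x hx]
        simp only [hflux', energyDensity, hpt, hqt]
        linarith
    _ = (flux L - flux 0) + -(lam - M * (1 + Real.exp (2 * lam * L))) *
          ∫ x in (0 : ℝ)..L, energyDensity L lam x (p x) (q x) := by
        rw [intervalIntegral.integral_add (hint cF) (hint (cE.const_mul _)), hFint,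
          intervalIntegral.integral_const_mul]
    _ ≤ _ := by linarith

/-- The weights lie between `1` and `exp (2 λ L)`. -/
lemma energyDensity_bounds {L lam x p q : ℝ} (hlam : 0 < lam) (hx : x ∈ Icc 0 L) :
    p ^ 2 + q ^ 2 ≤ energyDensity L lam x p q ∧
      energyDensity L lam x p q ≤ Real.exp (2 * lam * L) * (p ^ 2 + q ^ 2) := by
  obtain ⟨hx0, hxL⟩ := hx
  have a1 : 1 ≤ Real.exp (lam * (2 * L - x)) := Real.one_le_exp (by nlinarith)
  have b1 : 1 ≤ Real.exp (lam * x) := Real.one_le_exp (by positivity)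
  have a2 : Real.exp (lam * (2 * L - x)) ≤ Real.exp (2 * lam * L) :=
    Real.exp_le_exp.2 (by nlinarith)
  have b2 : Real.exp (lam * x) ≤ Real.exp (2 * lam * L) := Real.exp_le_exp.2 (by nlinarith)
  unfold energyDensity
  constructor
  · nlinarith [sq_nonneg p, sq_nonneg q]
  · nlinarith [sq_nonneg p, sq_nonneg q]

/-- If `|k| ≤ e^{−λL}` and `M < λ/(1 + e^{2λL})`, the closed-loop Bastin–Coron system
with feedback gain `k` is exponentially stable in `L²`, with constants depending only
on `λ, L, M, k`. -/
theorem bastin_coron_exponential_stability_exp_weights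
    (L M lam k : ℝ) (hL : 0 < L) (hM : 0 < M) (hlam : 0 < lam)
    (hk : |k| ≤ Real.exp (-lam * L))
    (hMlam : M < lam / (1 + Real.exp (2 * lam * L))) :
    ∃ C ≥ (1 : ℝ), ∃ μ > (0 : ℝ),
      ∀ δp δm dtp dxp dtm dxm : ℝ → ℝ → ℝ,
        IsBastinCoronSolution L M δp δm dtp dxp dtm dxm →
        (∀ t ∈ Set.Ici (0 : ℝ), δp t 0 = k * δm t 0 ∧ δm t L = δp t L) →
        ∀ t ∈ Set.Ici (0 : ℝ),
          (∫ x in (0 : ℝ)..L, ((δp t x) ^ 2 + (δm t x) ^ 2)) ≤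
            C * Real.exp (-μ * t) * ∫ x in (0 : ℝ)..L, ((δp 0 x) ^ 2 + (δm 0 x) ^ 2) := by
  set c := lam - M * (1 + Real.exp (2 * lam * L)) with hc
  have hcpos : 0 < c := by
    rw [lt_div_iff₀ (by positivity)] at hMlam
    linarith
  refine ⟨Real.exp (2 * lam * L), Real.one_le_exp (by positivity), c, hcpos, ?_⟩
  rintro δp δm dtp dxp dtm dxm ⟨hd, hcont, heq⟩ hbc t ht
  have cdtp : ContinuousOn (fun p : ℝ × ℝ => dtp p.1 p.2) (Ici 0 ×ˢ Icc 0 L) := hcont.fst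
  have cdxp : ContinuousOn (fun p : ℝ × ℝ => dxp p.1 p.2) (Ici 0 ×ˢ Icc 0 L) := hcont.snd.fst
  have cdtm : ContinuousOn (fun p : ℝ × ℝ => dtm p.1 p.2) (Ici 0 ×ˢ Icc 0 L) :=
    hcont.snd.snd.fst
  have cdxm : ContinuousOn (fun p : ℝ × ℝ => dxm p.1 p.2) (Ici 0 ×ˢ Icc 0 L) :=
    hcont.snd.snd.snd
  have cδp := continuousOn_of_partials (fun t ht x hx => (hd t ht x hx).1)
    (fun t ht x hx => (hd t ht x hx).2.1) cdtp
  have cδm := continuousOn_of_partials (fun t ht x hx => (hd t ht x hx).2.2.1)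
    (fun t ht x hx => (hd t ht x hx).2.2.2) cdtm
  have cE : ContinuousOn (fun p : ℝ × ℝ =>
      energyDensity L lam p.2 (δp p.1 p.2) (δm p.1 p.2)) (Ici 0 ×ˢ Icc 0 L) := by
    unfold energyDensity; fun_prop
  set V : ℝ → ℝ := fun t => ∫ x in (0 : ℝ)..L, energyDensity L lam x (δp t x) (δm t x) with hV
  have cV : ContinuousOn V (Ici 0) :=
    continuousOn_integral hL (f := fun t x => energyDensity L lam x (δp t x) (δm t x)) cE
  have dV : ∀ s, 0 < s → HasDerivAt V (∫ x in (0 : ℝ)..L,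
      (Real.exp (lam * (2 * L - x)) * (2 * δp s x * dtp s x) +
        Real.exp (lam * x) * (2 * δm s x * dtm s x))) s := by
    intro s hs
    refine hasDerivAt_integral_of_partial hL
      (f := fun t x => energyDensity L lam x (δp t x) (δm t x))
      (ft := fun s x => Real.exp (lam * (2 * L - x)) * (2 * δp s x * dtp s x) +
        Real.exp (lam * x) * (2 * δm s x * dtm s x)) cE (by fun_prop) ?_ hs
    intro r hr x hx
    refine ((((hd r hr x hx).1.pow 2).const_mul (Real.exp (lam * (2 * L - x)))).add
      (((hd r hr x hx).2.2.1.pow 2).const_mul (Real.exp (lam * x)))).congr_deriv ?_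
    push_cast
    ring
  have dissip : ∀ s, 0 < s → (∫ x in (0 : ℝ)..L,
      (Real.exp (lam * (2 * L - x)) * (2 * δp s x * dtp s x) +
        Real.exp (lam * x) * (2 * δm s x * dtm s x))) ≤ -c * V s := fun s hs =>
    energy_dissipation hL hM hlam hk (fun x hx => (hd s hs.le x hx).2.1)
      (fun x hx => (hd s hs.le x hx).2.2.2)
      (continuousOn_slice cdtp hs.le) (continuousOn_slice cdxp hs.le)
      (continuousOn_slice cdtm hs.le) (continuousOn_slice cdxm hs.le)
      (fun x hx => (heq s hs.le x hx).1) (fun x hx => (heq s hs.le x hx).2)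
      (hbc s hs.le).1 (hbc s hs.le).2
  -- Gronwall: `exp (c t) V t` is nonincreasing.
  have dW : ∀ s, 0 < s → HasDerivAt (fun s => Real.exp (c * s) * V s)
      (Real.exp (c * s) * (c * 1) * V s + Real.exp (c * s) * _) s := fun s hs =>
    (((hasDerivAt_id s).const_mul c).exp).mul (dV s hs)
  have anti : AntitoneOn (fun s => Real.exp (c * s) * V s) (Ici 0) := by
    refine antitoneOn_of_deriv_nonpos (convex_Ici 0) (by fun_prop) ?_ ?_
    · rw [interior_Ici]
      exact fun s hs => (dW s hs).differentiableAt.differentiableWithinAt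
    · rw [interior_Ici]
      intro s hs
      rw [(dW s hs).deriv]
      nlinarith [mul_le_mul_of_nonneg_left (dissip s hs) (Real.exp_pos (c * s)).le]
  have hdecay : V t ≤ Real.exp (-c * t) * V 0 := by
    have h := anti self_mem_Ici ht (show (0 : ℝ) ≤ t from ht)
    simp only [mul_zero, Real.exp_zero, one_mul] at h
    calc V t = Real.exp (-c * t) * (Real.exp (c * t) * V t) := by
          rw [← mul_assoc, ← Real.exp_add]; simp
      _ ≤ _ := by gcongr
  have hint : ∀ {g : ℝ → ℝ}, ContinuousOn g (Icc 0 L) → IntervalIntegrable g volume 0 L :=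
    fun h => ContinuousOn.intervalIntegrable (by rwa [uIcc_of_le hL.le])
  have iE : ∀ s, 0 ≤ s → IntervalIntegrable
      (fun x => energyDensity L lam x (δp s x) (δm s x)) volume 0 L := fun s hs =>
    hint (continuousOn_slice (f := fun t x => energyDensity L lam x (δp t x) (δm t x)) cE hs)
  have iN : ∀ s, 0 ≤ s → IntervalIntegrable
      (fun x => (δp s x) ^ 2 + (δm s x) ^ 2) volume 0 L := fun s hs =>
    hint (((continuousOn_slice cδp hs).pow 2).add ((continuousOn_slice cδm hs).pow 2))
  have hlow : (∫ x in (0 : ℝ)..L, ((δp t x) ^ 2 + (δm t x) ^ 2)) ≤ V t :=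
    intervalIntegral.integral_mono_on hL.le (iN t ht) (iE t ht)
      fun x hx => (energyDensity_bounds hlam hx).1
  have hup : V 0 ≤ Real.exp (2 * lam * L) *
      ∫ x in (0 : ℝ)..L, ((δp 0 x) ^ 2 + (δm 0 x) ^ 2) := by
    rw [← intervalIntegral.integral_const_mul]
    exact intervalIntegral.integral_mono_on hL.le (iE 0 le_rfl) ((iN 0 le_rfl).const_mul _)
      fun x hx => (energyDensity_bounds hlam hx).2
  calc _ ≤ V t := hlow
    _ ≤ Real.exp (-c * t) * V 0 := hdecay
    _ ≤ Real.exp (-c * t) * (Real.exp (2 * lam * L) *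
          ∫ x in (0 : ℝ)..L, ((δp 0 x) ^ 2 + (δm 0 x) ^ 2)) := by gcongr
    _ = _ := by ring
end

section
/- Let L > 0, M > 0, ψ > 0, υ ∈ (tanh²(ψL), 1] and k ∈ ℝ satisfy M ≤ (ψ/2)·(1/√υ − √υ) and k² ≤ (√υ − tanh(ψL))/(√υ + tanh(ψL)). Then for every classical solution δ₊, δ₋ of the closed-loop Bastin–Coron system with feedback gain k, the Lyapunov function E(t) = (1/2)·∫₀ᴸ [h₊(x−L)·δ₊(t,x)² + h₋(x−L)·δ₋(t,x)²] dx satisfies E(t) ≤ exp(−ψ·√υ·t)·E(0) for all t ≥ 0. -/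
/-!
The proof is an energy estimate. Write `G t x = h₊(x - L) δ₊² + h₋(x - L) δ₋²` and
`Φ t x = h₋(x - L) δ₋² - h₊(x - L) δ₊²`. Substituting the two equations for the time derivatives
gives `∂ₜG + ψ√υ G - ∂ₓΦ = -ψ(1 - υ) cosh(ψ(x - L)) (δ₊² + δ₋²) - 4M√υ cosh(ψ(x - L)) δ₊δ₋`, because
the `sinh` contributions of the weights and of their derivatives cancel. The bound on `M` says
`2M√υ ≤ ψ(1 - υ)`, so the right-hand side is nonpositive (`energy_density_le`).

Integrating over `[0, L]`, the flux difference `Φ(L) - Φ(0)` is nonpositive: at `x = L` both weights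
equal `√υ` and the two terms cancel by `δ₋ = δ₊`, while at `x = 0` the bound on `k` says exactly
`k² h₊(-L) ≤ h₋(-L)` (`gain_bound`). Hence `(∫ G)' ≤ -ψ√υ ∫ G` (`energy_dissipation`), and
`exp(ψ√υ t) ∫ G` is nonincreasing. Differentiation under the integral sign holds for `t > 0`;
at `t = 0` only continuity from the right is used, since nothing is assumed uniformly for `t < 0`.
-/

open MeasureTheory

/-- The hyperbolic weight `h₊(x) = √υ·cosh(ψx) − sinh(ψx)`. -/
noncomputable def hplus (ψ υ x : ℝ) : ℝ :=
  Real.sqrt υ * Real.cosh (ψ * x) - Real.sinh (ψ * x)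

/-- The hyperbolic weight `h₋(x) = √υ·cosh(ψx) + sinh(ψx)`. -/
noncomputable def hminus (ψ υ x : ℝ) : ℝ :=
  Real.sqrt υ * Real.cosh (ψ * x) + Real.sinh (ψ * x)

theorem exists_bound_strip {L : ℝ} {g : ℝ → ℝ → ℝ}
    (hg : ContinuousOn (fun p : ℝ × ℝ => g p.1 p.2) (Set.Ici 0 ×ˢ Set.Icc 0 L)) (T : ℝ) :
    ∃ C, ∀ s ∈ Set.Icc (0 : ℝ) T, ∀ x ∈ Set.Icc (0 : ℝ) L, ‖g s x‖ ≤ C := by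
  obtain ⟨C, hC⟩ := (isCompact_Icc.prod isCompact_Icc : IsCompact
    (Set.Icc (0 : ℝ) T ×ˢ Set.Icc (0 : ℝ) L)).exists_bound_of_continuousOn
    (hg.mono (Set.prod_mono_left Set.Icc_subset_Ici_self))
  exact ⟨C, fun s hs x hx => hC (s, x) ⟨hs, hx⟩⟩

theorem continuousOn_slice_space {L : ℝ} {g : ℝ → ℝ → ℝ}
    (hg : ContinuousOn (fun p : ℝ × ℝ => g p.1 p.2) (Set.Ici 0 ×ˢ Set.Icc 0 L))
    {t : ℝ} (ht : 0 ≤ t) : ContinuousOn (g t) (Set.Icc 0 L) :=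
  hg.comp (f := fun x => (t, x)) (by fun_prop) (fun _ hx => ⟨ht, hx⟩)

theorem continuousOn_slice_time {L : ℝ} {g : ℝ → ℝ → ℝ}
    (hg : ContinuousOn (fun p : ℝ × ℝ => g p.1 p.2) (Set.Ici 0 ×ˢ Set.Icc 0 L))
    {x : ℝ} (hx : x ∈ Set.Icc 0 L) : ContinuousOn (fun t => g t x) (Set.Ici 0) :=
  hg.comp (f := fun t => (t, x)) (by fun_prop) (fun _ ht => ⟨ht, hx⟩)

/-- Separate continuity in `x` together with a jointly continuous time derivative gives joint
continuity: on bounded time intervals the time slices are uniformly Lipschitz. -/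
theorem continuousOn_strip_of_hasDerivAt {L : ℝ} {f ft : ℝ → ℝ → ℝ}
    (hf : ∀ t, 0 ≤ t → ∀ x ∈ Set.Icc (0 : ℝ) L, HasDerivAt (fun s => f s x) (ft t x) t)
    (hx : ∀ t, 0 ≤ t → ContinuousOn (f t) (Set.Icc 0 L))
    (hft : ContinuousOn (fun p : ℝ × ℝ => ft p.1 p.2) (Set.Ici 0 ×ˢ Set.Icc 0 L)) :
    ContinuousOn (fun p : ℝ × ℝ => f p.1 p.2) (Set.Ici 0 ×ˢ Set.Icc 0 L) := by
  rintro ⟨t, x⟩ ⟨ht, hxL⟩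
  obtain ⟨C, hC⟩ := exists_bound_strip hft (t + 1)
  have key : ContinuousOn (fun p : ℝ × ℝ => f p.1 p.2)
      (Set.Icc 0 (t + 1) ×ˢ Set.Icc 0 L) := by
    refine continuousOn_prod_of_continuousOn_lipschitzOnWith _ C.toNNReal
      (fun a ha => hx a ha.1) (fun b hb => ?_)
    refine (convex_Icc _ _).lipschitzOnWith_of_nnnorm_hasDerivWithin_le
      (fun s hs => (hf s hs.1 b hb).hasDerivWithinAt) (fun s hs => ?_)
    exact NNReal.le_toNNReal_of_coe_le (hC s hs b hb)
  refine (key (t, x) ⟨⟨ht, by linarith⟩, hxL⟩).mono_of_mem_nhdsWithin ?_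
  have h1 : {p : ℝ × ℝ | p.1 < t + 1} ∈ nhds (t, x) :=
    (isOpen_lt continuous_fst continuous_const).mem_nhds (by simp)
  filter_upwards [self_mem_nhdsWithin, mem_nhdsWithin_of_mem_nhds h1] with p hp hp1
  exact ⟨⟨hp.1, le_of_lt hp1⟩, hp.2⟩

theorem continuousOn_integral_strip {L : ℝ} (hL : 0 < L) {G : ℝ → ℝ → ℝ}
    (hG : ContinuousOn (fun p : ℝ × ℝ => G p.1 p.2) (Set.Ici 0 ×ˢ Set.Icc 0 L)) :
    ContinuousOn (fun t => ∫ x in (0 : ℝ)..L, G t x) (Set.Ici 0) := by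
  intro t ht
  obtain ⟨C, hC⟩ := exists_bound_strip hG (t + 1)
  have hI : Set.uIoc 0 L ⊆ Set.Icc 0 L := by
    rw [Set.uIoc_of_le hL.le]; exact Set.Ioc_subset_Icc_self
  refine intervalIntegral.continuousWithinAt_of_dominated_interval (bound := fun _ => C)
    ?_ ?_ intervalIntegrable_const ?_
  · filter_upwards [self_mem_nhdsWithin] with s hs
    exact ((continuousOn_slice_space hG hs).mono hI).aestronglyMeasurable measurableSet_uIoc
  · filter_upwards [self_mem_nhdsWithin,
      mem_nhdsWithin_of_mem_nhds (Iio_mem_nhds (lt_add_one t))] with s hs hs1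
    exact Filter.Eventually.of_forall fun x hx => hC s ⟨hs, le_of_lt hs1⟩ x (hI hx)
  · exact Filter.Eventually.of_forall fun x hx => continuousOn_slice_time hG (hI hx) t ht

theorem hasDerivAt_integral_strip {L : ℝ} (hL : 0 < L) {G Gt : ℝ → ℝ → ℝ}
    (hG : ContinuousOn (fun p : ℝ × ℝ => G p.1 p.2) (Set.Ici 0 ×ˢ Set.Icc 0 L))
    (hGt : ContinuousOn (fun p : ℝ × ℝ => Gt p.1 p.2) (Set.Ici 0 ×ˢ Set.Icc 0 L))
    (hd : ∀ t, 0 ≤ t → ∀ x ∈ Set.Icc (0 : ℝ) L, HasDerivAt (fun s => G s x) (Gt t x) t)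
    {t : ℝ} (ht : 0 < t) :
    HasDerivAt (fun s => ∫ x in (0 : ℝ)..L, G s x) (∫ x in (0 : ℝ)..L, Gt t x) t := by
  obtain ⟨C, hC⟩ := exists_bound_strip hGt (t + 1)
  have hI : Set.uIoc 0 L ⊆ Set.Icc 0 L := by
    rw [Set.uIoc_of_le hL.le]; exact Set.Ioc_subset_Icc_self
  refine (intervalIntegral.hasDerivAt_integral_of_dominated_loc_of_deriv_le
    (bound := fun _ => C) (s := Set.Icc 0 (t + 1)) (Icc_mem_nhds ht (lt_add_one t))
    ?_ ?_ ?_ ?_ intervalIntegrable_const ?_).2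
  · filter_upwards [Ioi_mem_nhds ht] with s hs
    exact ((continuousOn_slice_space hG (le_of_lt hs)).mono hI).aestronglyMeasurable
      measurableSet_uIoc
  · exact (continuousOn_slice_space hG ht.le).intervalIntegrable_of_Icc hL.le
  · exact ((continuousOn_slice_space hGt ht.le).mono hI).aestronglyMeasurable measurableSet_uIoc
  · exact Filter.Eventually.of_forall fun x hx s hs => hC s hs x (hI hx)
  · exact Filter.Eventually.of_forall fun x hx s hs => hd s hs.1 x (hI hx)

/-- The pointwise inequality `∂ₜG + ψ r G ≤ ∂ₓΦ`, with `r = √υ`, `c = cosh`, `s = sinh`, the values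
`p, m` of the solution, and `pt, px, mt, mx` its partial derivatives. -/
theorem energy_density_le {M ψ r c s p m pt px mt mx : ℝ} (hc : 0 < c) (hM : 0 < M) (hr : 0 < r)
    (hMr : 2 * M * r ≤ ψ * (1 - r ^ 2))
    (hp : pt + px + M * m = 0) (hm : mt - mx + M * p = 0) :
    (r * c - s) * (2 * p * pt) + (r * c + s) * (2 * m * mt)
        + ψ * r * ((r * c - s) * p ^ 2 + (r * c + s) * m ^ 2) ≤
      (ψ * (r * s + c) * m ^ 2 + (r * c + s) * (2 * m * mx))
        - (ψ * (r * s - c) * p ^ 2 + (r * c - s) * (2 * p * px)) := by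
  obtain rfl : pt = -px - M * m := by linarith
  obtain rfl : mt = mx - M * p := by linarith
  have h1 : 0 ≤ c * (p ^ 2 + m ^ 2) * (ψ * (1 - r ^ 2) - 2 * M * r) :=
    mul_nonneg (by positivity) (by linarith)
  have h2 : 0 ≤ 2 * M * r * c * (p + m) ^ 2 := by positivity
  nlinarith [h1, h2]

/-- The bound on the gain in the form used for the flux at `x = 0`: `k² h₊(-L) ≤ h₋(-L)`. -/
theorem gain_bound {L ψ υ k : ℝ} (hυ : Real.tanh (ψ * L) ^ 2 < υ)
    (hk : k ^ 2 ≤ (Real.sqrt υ - Real.tanh (ψ * L)) / (Real.sqrt υ + Real.tanh (ψ * L))) :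
    k ^ 2 * hplus ψ υ (0 - L) ≤ hminus ψ υ (0 - L) := by
  have habs := Real.sq_lt.1 hυ
  have hc := Real.cosh_pos (ψ * L)
  have hs : Real.sinh (ψ * L) = Real.tanh (ψ * L) * Real.cosh (ψ * L) := by
    rw [Real.tanh_eq_sinh_div_cosh]; field_simp
  rw [le_div_iff₀ (by linarith [habs.1])] at hk
  have := mul_le_mul_of_nonneg_right hk hc.le
  simp only [hplus, hminus, zero_sub, mul_neg, Real.cosh_neg, Real.sinh_neg, hs]
  linarith

theorem hasDerivAt_hplus (ψ υ L x : ℝ) :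
    HasDerivAt (fun y => hplus ψ υ (y - L))
      (ψ * (Real.sqrt υ * Real.sinh (ψ * (x - L)) - Real.cosh (ψ * (x - L)))) x := by
  have h : HasDerivAt (fun y => ψ * (y - L)) ψ x := by
    simpa using ((hasDerivAt_id x).sub_const L).const_mul ψ
  refine ((h.cosh.const_mul (Real.sqrt υ)).sub h.sinh).congr_deriv ?_
  ring

theorem hasDerivAt_hminus (ψ υ L x : ℝ) :
    HasDerivAt (fun y => hminus ψ υ (y - L))
      (ψ * (Real.sqrt υ * Real.sinh (ψ * (x - L)) + Real.cosh (ψ * (x - L)))) x := by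
  have h : HasDerivAt (fun y => ψ * (y - L)) ψ x := by
    simpa using ((hasDerivAt_id x).sub_const L).const_mul ψ
  refine ((h.cosh.const_mul (Real.sqrt υ)).add h.sinh).congr_deriv ?_
  ring

/-- The energy-dissipation inequality at a fixed time: `p, m` are the spatial profiles of the
solution, `px, mx` their spatial derivatives and `pt, mt` the time derivatives. -/
theorem energy_dissipation_s12 {L M ψ υ k : ℝ} (hL : 0 < L) (hM : 0 < M)
    (hυ : Real.tanh (ψ * L) ^ 2 < υ)
    (hMbound : M ≤ ψ / 2 * (1 / Real.sqrt υ - Real.sqrt υ))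
    (hk : k ^ 2 ≤ (Real.sqrt υ - Real.tanh (ψ * L)) / (Real.sqrt υ + Real.tanh (ψ * L)))
    {p m px mx pt mt : ℝ → ℝ}
    (hp : ∀ x ∈ Set.Icc 0 L, HasDerivAt p (px x) x)
    (hm : ∀ x ∈ Set.Icc 0 L, HasDerivAt m (mx x) x)
    (hpx : ContinuousOn px (Set.Icc 0 L)) (hmx : ContinuousOn mx (Set.Icc 0 L))
    (hpt : ContinuousOn pt (Set.Icc 0 L)) (hmt : ContinuousOn mt (Set.Icc 0 L))
    (hpeq : ∀ x ∈ Set.Icc 0 L, pt x + px x + M * m x = 0)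
    (hmeq : ∀ x ∈ Set.Icc 0 L, mt x - mx x + M * p x = 0)
    (h0 : p 0 = k * m 0) (h1 : m L = p L) :
    (∫ x in (0 : ℝ)..L, (hplus ψ υ (x - L) * (2 * p x * pt x)
        + hminus ψ υ (x - L) * (2 * m x * mt x))) ≤
      -(ψ * Real.sqrt υ) * ∫ x in (0 : ℝ)..L, (hplus ψ υ (x - L) * p x ^ 2
        + hminus ψ υ (x - L) * m x ^ 2) := by
  have hr : 0 < Real.sqrt υ := Real.sqrt_pos.2 (lt_of_le_of_lt (sq_nonneg _) hυ)
  have hMr : 2 * M * Real.sqrt υ ≤ ψ * (1 - Real.sqrt υ ^ 2) := by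
    have h := mul_le_mul_of_nonneg_right hMbound hr.le
    have h' : ψ / 2 * (1 / Real.sqrt υ - Real.sqrt υ) * Real.sqrt υ
        = ψ / 2 * (1 - Real.sqrt υ ^ 2) := by field_simp
    linarith
  have cp : ContinuousOn p (Set.Icc 0 L) := HasDerivAt.continuousOn hp
  have cm : ContinuousOn m (Set.Icc 0 L) := HasDerivAt.continuousOn hm
  have chp : ContinuousOn (fun x => hplus ψ υ (x - L)) (Set.Icc 0 L) :=
    HasDerivAt.continuousOn fun x _ => hasDerivAt_hplus ψ υ L x
  have chm : ContinuousOn (fun x => hminus ψ υ (x - L)) (Set.Icc 0 L) :=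
    HasDerivAt.continuousOn fun x _ => hasDerivAt_hminus ψ υ L x
  have iG : IntervalIntegrable (fun x => hplus ψ υ (x - L) * p x ^ 2
      + hminus ψ υ (x - L) * m x ^ 2) volume 0 L :=
    ContinuousOn.intervalIntegrable_of_Icc hL.le (by fun_prop)
  have iGt : IntervalIntegrable (fun x => hplus ψ υ (x - L) * (2 * p x * pt x)
      + hminus ψ υ (x - L) * (2 * m x * mt x)) volume 0 L :=
    ContinuousOn.intervalIntegrable_of_Icc hL.le (by fun_prop)
  -- `Φx` is the spatial derivative of the flux `Φ = h₋ m² - h₊ p²`.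
  let Φx : ℝ → ℝ := fun x =>
    (ψ * (Real.sqrt υ * Real.sinh (ψ * (x - L)) + Real.cosh (ψ * (x - L))) * m x ^ 2
      + hminus ψ υ (x - L) * (2 * m x * mx x))
    - (ψ * (Real.sqrt υ * Real.sinh (ψ * (x - L)) - Real.cosh (ψ * (x - L))) * p x ^ 2
      + hplus ψ υ (x - L) * (2 * p x * px x))
  have iΦ : IntervalIntegrable Φx volume 0 L :=
    ContinuousOn.intervalIntegrable_of_Icc hL.le (by fun_prop)
  have hΦ : ∫ x in (0 : ℝ)..L, Φx x =
      (hminus ψ υ (L - L) * m L ^ 2 - hplus ψ υ (L - L) * p L ^ 2)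
        - (hminus ψ υ (0 - L) * m 0 ^ 2 - hplus ψ υ (0 - L) * p 0 ^ 2) := by
    refine intervalIntegral.integral_eq_sub_of_hasDerivAt
      (f := fun x => hminus ψ υ (x - L) * m x ^ 2 - hplus ψ υ (x - L) * p x ^ 2)
      (fun x hx => ?_) iΦ
    rw [Set.uIcc_of_le hL.le] at hx
    refine (((hasDerivAt_hminus ψ υ L x).mul ((hm x hx).pow 2)).sub
      ((hasDerivAt_hplus ψ υ L x).mul ((hp x hx).pow 2))).congr_deriv ?_
    simp [Φx]
  have hΦ0 : ∫ x in (0 : ℝ)..L, Φx x ≤ 0 := by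
    have hg := mul_le_mul_of_nonneg_right (gain_bound hυ hk) (sq_nonneg (m 0))
    have hw : hminus ψ υ (L - L) = hplus ψ υ (L - L) := by simp [hplus, hminus]
    rw [hΦ, h0, h1, hw]
    nlinarith [hg]
  have hle : ∫ x in (0 : ℝ)..L, ((hplus ψ υ (x - L) * (2 * p x * pt x)
        + hminus ψ υ (x - L) * (2 * m x * mt x))
        + ψ * Real.sqrt υ * (hplus ψ υ (x - L) * p x ^ 2 + hminus ψ υ (x - L) * m x ^ 2)) ≤
      ∫ x in (0 : ℝ)..L, Φx x :=
    intervalIntegral.integral_mono_on hL.le (iGt.add (iG.const_mul _)) iΦ fun x hx =>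
      energy_density_le (Real.cosh_pos _) hM hr hMr (hpeq x hx) (hmeq x hx)
  rw [intervalIntegral.integral_add iGt (iG.const_mul _),
    intervalIntegral.integral_const_mul] at hle
  linarith

/-- If `M ≤ (ψ/2)(1/√υ − √υ)` and `k² ≤ (√υ − tanh(ψL))/(√υ + tanh(ψL))`, then the
Lyapunov function with hyperbolic weights decays at the exponential rate `ψ√υ` along
every classical solution of the closed-loop Bastin–Coron system. -/
theorem bastin_coron_lyapunov_decay_hyperbolic_weights
    (L M ψ υ k : ℝ) (hL : 0 < L) (hM : 0 < M) (hψ : 0 < ψ)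
    (hυ : Real.tanh (ψ * L) ^ 2 < υ) (hυ1 : υ ≤ 1)
    (hMbound : M ≤ ψ / 2 * (1 / Real.sqrt υ - Real.sqrt υ))
    (hkbound : k ^ 2 ≤ (Real.sqrt υ - Real.tanh (ψ * L)) / (Real.sqrt υ + Real.tanh (ψ * L)))
    (δp δm dtp dxp dtm dxm : ℝ → ℝ → ℝ)
    (hsol : IsBastinCoronSolution L M δp δm dtp dxp dtm dxm)
    (hbc : ∀ t ∈ Set.Ici (0 : ℝ), δp t 0 = k * δm t 0 ∧ δm t L = δp t L) :
    ∀ t ∈ Set.Ici (0 : ℝ),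
      (1 / 2) * (∫ x in (0 : ℝ)..L,
          (hplus ψ υ (x - L) * (δp t x) ^ 2 + hminus ψ υ (x - L) * (δm t x) ^ 2)) ≤
        Real.exp (-(ψ * Real.sqrt υ) * t) *
          ((1 / 2) * ∫ x in (0 : ℝ)..L,
            (hplus ψ υ (x - L) * (δp 0 x) ^ 2 + hminus ψ υ (x - L) * (δm 0 x) ^ 2)) := by
  obtain ⟨hder, hcont, heq⟩ := hsol
  have cdtp : ContinuousOn (fun q : ℝ × ℝ => dtp q.1 q.2) (Set.Ici 0 ×ˢ Set.Icc 0 L) :=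
    hcont.fst
  have cdxp : ContinuousOn (fun q : ℝ × ℝ => dxp q.1 q.2) (Set.Ici 0 ×ˢ Set.Icc 0 L) :=
    hcont.snd.fst
  have cdtm : ContinuousOn (fun q : ℝ × ℝ => dtm q.1 q.2) (Set.Ici 0 ×ˢ Set.Icc 0 L) :=
    hcont.snd.snd.fst
  have cdxm : ContinuousOn (fun q : ℝ × ℝ => dxm q.1 q.2) (Set.Ici 0 ×ˢ Set.Icc 0 L) :=
    hcont.snd.snd.snd
  have cδp : ContinuousOn (fun q : ℝ × ℝ => δp q.1 q.2) (Set.Ici 0 ×ˢ Set.Icc 0 L) :=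
    continuousOn_strip_of_hasDerivAt (fun t ht x hx => (hder t ht x hx).1)
      (fun t ht => HasDerivAt.continuousOn fun x hx => (hder t ht x hx).2.1) cdtp
  have cδm : ContinuousOn (fun q : ℝ × ℝ => δm q.1 q.2) (Set.Ici 0 ×ˢ Set.Icc 0 L) :=
    continuousOn_strip_of_hasDerivAt (fun t ht x hx => (hder t ht x hx).2.2.1)
      (fun t ht => HasDerivAt.continuousOn fun x hx => (hder t ht x hx).2.2.2) cdtm
  have chp : Continuous (fun q : ℝ × ℝ => hplus ψ υ (q.2 - L)) := by
    unfold hplus; fun_prop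
  have chm : Continuous (fun q : ℝ × ℝ => hminus ψ υ (q.2 - L)) := by
    unfold hminus; fun_prop
  let G : ℝ → ℝ → ℝ := fun t x =>
    hplus ψ υ (x - L) * (δp t x) ^ 2 + hminus ψ υ (x - L) * (δm t x) ^ 2
  let Gt : ℝ → ℝ → ℝ := fun t x =>
    hplus ψ υ (x - L) * (2 * δp t x * dtp t x) + hminus ψ υ (x - L) * (2 * δm t x * dtm t x)
  have cG : ContinuousOn (fun q : ℝ × ℝ => G q.1 q.2) (Set.Ici 0 ×ˢ Set.Icc 0 L) :=
    (chp.continuousOn.mul (cδp.pow 2)).add (chm.continuousOn.mul (cδm.pow 2))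
  have cGt : ContinuousOn (fun q : ℝ × ℝ => Gt q.1 q.2) (Set.Ici 0 ×ˢ Set.Icc 0 L) :=
    (chp.continuousOn.mul ((continuousOn_const.mul cδp).mul cdtp)).add
      (chm.continuousOn.mul ((continuousOn_const.mul cδm).mul cdtm))
  have hd : ∀ t, 0 ≤ t → ∀ x ∈ Set.Icc (0 : ℝ) L, HasDerivAt (fun s => G s x) (Gt t x) t := by
    intro t ht x hx
    obtain ⟨h1, -, h2, -⟩ := hder t ht x hx
    refine (((h1.pow 2).const_mul (hplus ψ υ (x - L))).add
      ((h2.pow 2).const_mul (hminus ψ υ (x - L)))).congr_deriv ?_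
    simp [Gt]
  -- The rescaled energy `exp(ψ√υ t) ∫ G` is nonincreasing on `[0, ∞)`.
  let W : ℝ → ℝ := fun t => Real.exp (ψ * Real.sqrt υ * t) * ∫ x in (0 : ℝ)..L, G t x
  have hW : ∀ t, 0 < t → HasDerivAt W
      (Real.exp (ψ * Real.sqrt υ * t) * (ψ * Real.sqrt υ) * (∫ x in (0 : ℝ)..L, G t x)
        + Real.exp (ψ * Real.sqrt υ * t) * ∫ x in (0 : ℝ)..L, Gt t x) t := by
    intro t ht
    have h : HasDerivAt (fun s => ψ * Real.sqrt υ * s) (ψ * Real.sqrt υ) t := by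
      simpa using (hasDerivAt_id t).const_mul (ψ * Real.sqrt υ)
    exact h.exp.mul (hasDerivAt_integral_strip hL cG cGt hd ht)
  have hanti : AntitoneOn W (Set.Ici 0) := by
    refine antitoneOn_of_deriv_nonpos (convex_Ici 0) ?_ ?_ ?_
    · exact ContinuousOn.mul (by fun_prop) (continuousOn_integral_strip hL cG)
    · intro t ht
      rw [interior_Ici] at ht
      exact (hW t ht).differentiableAt.differentiableWithinAt
    · intro t ht
      rw [interior_Ici] at ht
      have ht0 : 0 ≤ t := le_of_lt ht
      have hdis : (∫ x in (0 : ℝ)..L, Gt t x) ≤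
          -(ψ * Real.sqrt υ) * ∫ x in (0 : ℝ)..L, G t x :=
        energy_dissipation_s12 hL hM hυ hMbound hkbound
          (fun x hx => (hder t ht0 x hx).2.1) (fun x hx => (hder t ht0 x hx).2.2.2)
          (continuousOn_slice_space cdxp ht0) (continuousOn_slice_space cdxm ht0)
          (continuousOn_slice_space cdtp ht0) (continuousOn_slice_space cdtm ht0)
          (fun x hx => (heq t ht0 x hx).1) (fun x hx => (heq t ht0 x hx).2)
          (hbc t ht0).1 (hbc t ht0).2
      rw [(hW t ht).deriv]
      nlinarith [mul_le_mul_of_nonneg_left hdis (Real.exp_pos (ψ * Real.sqrt υ * t)).le]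
  intro t ht
  have h : Real.exp (ψ * Real.sqrt υ * t) * (∫ x in (0 : ℝ)..L, G t x)
      ≤ ∫ x in (0 : ℝ)..L, G 0 x := by
    simpa [W] using hanti (Set.self_mem_Ici) ht ht
  have h2 := mul_le_mul_of_nonneg_left h (Real.exp_pos (-(ψ * Real.sqrt υ) * t)).le
  rw [← mul_assoc, ← Real.exp_add,
    show -(ψ * Real.sqrt υ) * t + ψ * Real.sqrt υ * t = 0 by ring, Real.exp_zero, one_mul] at h2
  change 1 / 2 * (∫ x in (0 : ℝ)..L, G t x) ≤
    Real.exp (-(ψ * Real.sqrt υ) * t) * (1 / 2 * ∫ x in (0 : ℝ)..L, G 0 x)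
  linarith
end

section
/- Let L > 0, M > 0, τ > 0, k ∈ ℝ, σ ∈ (0, M), and set ω = √(M² − σ²) > 0. Define f(x) = (M + k·e^{−στ}·σ)·sin(ωx) − k·e^{−στ}·ω·cos(ωx) and g(x) = −(σ + k·e^{−στ}·M)·sin(ωx) − ω·cos(ωx). Then the functions δ₊(t,x) = e^{σt}·f(x) and δ₋(t,x) = e^{σt}·g(x) satisfy ∂ₜδ₊ + ∂ₓδ₊ + M·δ₋ = 0 and ∂ₜδ₋ − ∂ₓδ₋ + M·δ₊ = 0 for all t and all x, and the delayed boundary condition δ₊(t,0) = k·δ₋(t−τ,0) for all t. Moreover, if k ≠ −e^{στ} and cos(ωL) ≠ 0, then f(L) = g(L) holds if and only if H(σ,k,τ) := (σ+M)·tan(ωL)/ω − (k·e^{−στ} − 1)/(k·e^{−στ} + 1) = 0. -/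
/-!
Write `a = k e^{-στ}` and `ω² = M² - σ²`. Both profiles are of the form
`A sin(ωx) + B cos(ωx)`, so each PDE reduces to the vanishing of the coefficients of
`sin(ωx)` and `cos(ωx)`, which uses only `ω² = M² - σ²`. The boundary condition at `0` is
`e^{σ(t-τ)} = e^{σt} e^{-στ}`. Finally
`f(L) - g(L) = (σ + M)(a + 1) sin(ωL) - ω (a - 1) cos(ωL)`, and dividing by
`ω (a + 1) cos(ωL) ≠ 0` gives `H`.
-/

/-- Spatial derivative of a separated profile `E (A sin(ωx) - B cos(ωx))`. -/
lemma deriv_separated_profile (E A B w x : ℝ) :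
    deriv (fun y => E * (A * Real.sin (w * y) - B * Real.cos (w * y))) x
      = E * (A * w * Real.cos (w * x) + B * w * Real.sin (w * x)) := by
  have h : HasDerivAt (fun y : ℝ => w * y) w x := by
    simpa using (hasDerivAt_id x).const_mul w
  have h2 := ((h.sin.const_mul A).sub (h.cos.const_mul B)).const_mul E
  refine h2.deriv.trans ?_
  ring

lemma deriv_exp_mul_const (s C t : ℝ) :
    deriv (fun r => Real.exp (s * r) * C) t = s * Real.exp (s * t) * C := by
  have h : HasDerivAt (fun y : ℝ => s * y) s t := by
    simpa using (hasDerivAt_id t).const_mul s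
  refine (h.exp.mul_const C).deriv.trans ?_
  ring

/-- The separation ansatz for the Bastin–Coron system with delayed boundary feedback:
with `ω = √(M² − σ²)`, the functions `δ₊(t,x) = e^{σt} f(x)`, `δ₋(t,x) = e^{σt} g(x)`
(with `f, g` as given) solve the PDEs and the delayed boundary condition
`δ₊(t,0) = k δ₋(t−τ,0)`; moreover, if `k ≠ −e^{στ}` and `cos(ωL) ≠ 0`, then
`f(L) = g(L)` if and only if `H(σ,k,τ) = 0`. -/
theorem bastin_coron_delay_separation_ansatz
    (L M τ k σ : ℝ) (hL : 0 < L) (hM : 0 < M) (hτ : 0 < τ)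
    (hσ : σ ∈ Set.Ioo 0 M) :
    let ω : ℝ := Real.sqrt (M ^ 2 - σ ^ 2)
    let f : ℝ → ℝ := fun x =>
      (M + k * Real.exp (-σ * τ) * σ) * Real.sin (ω * x)
        - k * Real.exp (-σ * τ) * ω * Real.cos (ω * x)
    let g : ℝ → ℝ := fun x =>
      -(σ + k * Real.exp (-σ * τ) * M) * Real.sin (ω * x) - ω * Real.cos (ω * x)
    let δp : ℝ → ℝ → ℝ := fun t x => Real.exp (σ * t) * f x
    let δm : ℝ → ℝ → ℝ := fun t x => Real.exp (σ * t) * g x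
    0 < ω ∧
    (∀ t x : ℝ,
      deriv (fun s => δp s x) t + deriv (fun y => δp t y) x + M * δm t x = 0 ∧
      deriv (fun s => δm s x) t - deriv (fun y => δm t y) x + M * δp t x = 0) ∧
    (∀ t : ℝ, δp t 0 = k * δm (t - τ) 0) ∧
    (k ≠ -Real.exp (σ * τ) → Real.cos (ω * L) ≠ 0 →
      (f L = g L ↔
        (σ + M) * Real.tan (ω * L) / ω
          - (k * Real.exp (-σ * τ) - 1) / (k * Real.exp (-σ * τ) + 1) = 0)) := by
  intro ω f g δp δm
  obtain ⟨h0, h1⟩ := hσ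
  have hpos : 0 < M ^ 2 - σ ^ 2 := by nlinarith
  have hω : 0 < ω := Real.sqrt_pos.mpr hpos
  have hω2 : ω ^ 2 = M ^ 2 - σ ^ 2 := Real.sq_sqrt hpos.le
  clear_value ω
  refine ⟨hω, fun t x => ⟨?_, ?_⟩, fun t => ?_, fun hk hc => ?_⟩
  · simp only [δp, δm, f, g, deriv_separated_profile, deriv_exp_mul_const]
    linear_combination
      Real.exp (σ * t) * (k * Real.exp (-σ * τ)) * Real.sin (ω * x) * hω2
  · simp only [δp, δm, f, g, deriv_separated_profile, deriv_exp_mul_const]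
    linear_combination -Real.exp (σ * t) * Real.sin (ω * x) * hω2
  · have he : Real.exp (σ * (t - τ)) = Real.exp (σ * t) * Real.exp (-σ * τ) := by
      rw [← Real.exp_add]; congr 1; ring
    simp only [δp, δm, f, g, he, mul_zero, Real.sin_zero, Real.cos_zero]
    ring
  · have hee : Real.exp (-σ * τ) * Real.exp (σ * τ) = 1 := by
      rw [← Real.exp_add]; simp
    have ha : k * Real.exp (-σ * τ) + 1 ≠ 0 := by
      intro h
      apply hk
      linear_combination Real.exp (σ * τ) * h - k * hee
    simp only [f, g]
    generalize k * Real.exp (-σ * τ) = a at ha ⊢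
    rw [Real.tan_eq_sin_div_cos]
    generalize Real.sin (ω * L) = s
    generalize Real.cos (ω * L) = c at hc ⊢
    have key : (σ + M) * (s / c) / ω - (a - 1) / (a + 1)
        = ((σ + M) * (a + 1) * s - ω * (a - 1) * c) / (ω * (a + 1) * c) := by
      field_simp
    have hden : ω * (a + 1) * c ≠ 0 := mul_ne_zero (mul_ne_zero hω.ne' ha) hc
    rw [key, div_eq_zero_iff, or_iff_left hden]
    constructor <;> intro h <;> linear_combination h
end

section
/- Let M > 0 and L > 0 with M·L ∈ (3π/4, π), and set s* = √(M² − (π/(2L))²) > 0. Then the function F(s) = √((M+s)/(M−s))·tan(√(M²−s²)·L) is strictly decreasing on [0, s*), satisfies F(0) = tan(ML) ∈ (−1, 0), and tends to −∞ as s → s*⁻; consequently F maps the interval [0, s*) bijectively onto (−∞, tan(ML)]. -/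
/-!
Write `F(s) = a(s) · tan θ(s)` with `a(s) = √((M+s)/(M−s))` and `θ(s) = √(M²−s²)·L`.
On `[0, s*)` the factor `a` is increasing with values `≥ 1`, while `θ` is decreasing with values
in `(π/2, ML] ⊂ (π/2, π)`, where `tan` is increasing and negative. Hence the negative factor
`tan θ(s)` decreases and is multiplied by an increasing positive factor, so `F` is strictly
decreasing. As `s → s*⁻`, `θ(s) → π/2⁺`, so `F(s) ≤ tan θ(s) → −∞`. Bijectivity follows
from strict monotonicity, continuity, and the intermediate value theorem.
-/

open Real Set Filter Topology

theorem tan_lt_tan_of_mem_Ioo_pi_div_two_pi {x y : ℝ} (hx : π / 2 < x) (hy : y < π)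
    (hxy : x < y) : tan x < tan y := by
  rw [← tan_sub_pi x, ← tan_sub_pi y]
  exact tan_lt_tan_of_lt_of_lt_pi_div_two (by linarith) (by linarith [pi_pos]) (by linarith)

theorem tan_neg_of_mem_Ioo_pi_div_two_pi {x : ℝ} (hx : π / 2 < x) (hy : x < π) :
    tan x < 0 := by
  rw [← tan_sub_pi x]
  exact tan_neg_of_neg_of_pi_div_two_lt (by linarith) (by linarith)

theorem tendsto_tan_nhdsGT_pi_div_two : Tendsto tan (𝓝[>] (π / 2)) atBot := by
  have h : Tendsto (fun x : ℝ => x - π) (𝓝[>] (π / 2)) (𝓝[>] (-(π / 2))) := by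
    refine tendsto_nhdsWithin_iff.2 ⟨?_, ?_⟩
    · have : Continuous (fun x : ℝ => x - π) := by fun_prop
      have := (this.tendsto (π / 2)).mono_left (nhdsWithin_le_nhds (s := Ioi (π / 2)))
      convert this using 2
      ring
    · filter_upwards [self_mem_nhdsWithin] with x hx
      simp only [mem_Ioi] at *
      linarith
  exact (tendsto_tan_neg_pi_div_two.comp h).congr fun x => tan_sub_pi x

/-- For `ML ∈ (3π/4, π)` and `s* = √(M² − (π/(2L))²)`, the function
`F(s) = √((M+s)/(M−s))·tan(√(M²−s²)·L)` is strictly decreasing on `[0, s*)`,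
satisfies `F(0) = tan(ML) ∈ (−1, 0)`, tends to `−∞` as `s → s*⁻`, and maps
`[0, s*)` bijectively onto `(−∞, tan(ML)]`. -/
theorem F_strict_anti_and_bijective
    (L M : ℝ) (hL : 0 < L) (hM : 0 < M)
    (hML : M * L ∈ Set.Ioo (3 * Real.pi / 4) Real.pi) :
    let sstar : ℝ := Real.sqrt (M ^ 2 - (Real.pi / (2 * L)) ^ 2)
    let F : ℝ → ℝ := fun s =>
      Real.sqrt ((M + s) / (M - s)) * Real.tan (Real.sqrt (M ^ 2 - s ^ 2) * L)
    0 < sstar ∧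
    StrictAntiOn F (Set.Ico 0 sstar) ∧
    F 0 = Real.tan (M * L) ∧
    Real.tan (M * L) ∈ Set.Ioo (-1 : ℝ) 0 ∧
    Filter.Tendsto F (nhdsWithin sstar (Set.Ico 0 sstar)) Filter.atBot ∧
    Set.BijOn F (Set.Ico 0 sstar) (Set.Iic (Real.tan (M * L))) := by
  intro sstar F
  obtain ⟨h1, h2⟩ := hML
  have hpi := pi_pos
  set c : ℝ := π / (2 * L) with hc
  have hc0 : 0 < c := by positivity
  have hcL : c * L = π / 2 := by rw [hc]; field_simp
  have hcM : c < M := by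
    have : c * L < M * L := by linarith
    exact lt_of_mul_lt_mul_right this hL.le
  have hpos : 0 < M ^ 2 - c ^ 2 := by nlinarith
  have hs0 : 0 < sstar := sqrt_pos.2 hpos
  have hsq : sstar ^ 2 = M ^ 2 - c ^ 2 := sq_sqrt hpos.le
  have hsM : sstar < M := by nlinarith
  have hθlow : ∀ s ∈ Ico 0 sstar, π / 2 < √(M ^ 2 - s ^ 2) * L := by
    intro s hs
    rw [← hcL]
    refine mul_lt_mul_of_pos_right (lt_sqrt_of_sq_lt ?_) hL
    nlinarith [hs.1, hs.2]
  have hθanti : ∀ s t, 0 ≤ s → s < t → t < sstar →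
      √(M ^ 2 - t ^ 2) * L < √(M ^ 2 - s ^ 2) * L := by
    intro s t hs hst ht
    exact mul_lt_mul_of_pos_right (sqrt_lt_sqrt (by nlinarith) (by nlinarith)) hL
  have hθup : ∀ s, √(M ^ 2 - s ^ 2) * L < π := by
    intro s
    refine lt_of_le_of_lt (mul_le_mul_of_nonneg_right ?_ hL.le) h2
    exact sqrt_le_iff.2 ⟨hM.le, by nlinarith [sq_nonneg s]⟩
  have htneg : ∀ s ∈ Ico 0 sstar, tan (√(M ^ 2 - s ^ 2) * L) < 0 := fun s hs =>
    tan_neg_of_mem_Ioo_pi_div_two_pi (hθlow s hs) (hθup s)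
  have hanti : StrictAntiOn F (Ico 0 sstar) := by
    intro s hs t ht hst
    have ht1 := tan_lt_tan_of_mem_Ioo_pi_div_two_pi (hθlow t ht) (hθup s)
      (hθanti s t hs.1 hst ht.2)
    have hMs : 0 < M - s := by linarith [hs.2]
    have hMt : 0 < M - t := by linarith [ht.2]
    have ha : √((M + s) / (M - s)) < √((M + t) / (M - t)) := by
      refine sqrt_lt_sqrt (div_nonneg (by linarith [hs.1]) hMs.le) ?_
      rw [div_lt_div_iff₀ hMs hMt]
      nlinarith
    have ha0 : 0 < √((M + s) / (M - s)) :=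
      sqrt_pos.2 (div_pos (by linarith [hs.1]) hMs)
    have htt := htneg t ht
    change √((M + t) / (M - t)) * _ < √((M + s) / (M - s)) * _
    nlinarith
  have hF0 : F 0 = tan (M * L) := by
    simp [F, hM.ne', sqrt_sq hM.le]
  have htan : tan (M * L) ∈ Ioo (-1 : ℝ) 0 := by
    refine ⟨?_, tan_neg_of_mem_Ioo_pi_div_two_pi (by linarith) h2⟩
    have h := tan_lt_tan_of_mem_Ioo_pi_div_two_pi (x := 3 * π / 4) (by linarith) h2 h1
    have h34 : tan (3 * π / 4) = -1 := by
      rw [show 3 * π / 4 = π - π / 4 by ring, tan_pi_sub, tan_pi_div_four]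
    linarith
  have htend : Tendsto F (𝓝[Ico 0 sstar] sstar) atBot := by
    have hθ : Tendsto (fun s => √(M ^ 2 - s ^ 2) * L) (𝓝[Ico 0 sstar] sstar)
        (𝓝[>] (π / 2)) := by
      refine tendsto_nhdsWithin_iff.2 ⟨?_, ?_⟩
      · have hcont : Continuous (fun s : ℝ => √(M ^ 2 - s ^ 2) * L) := by fun_prop
        have h := (hcont.tendsto sstar).mono_left
          (nhdsWithin_le_nhds (s := Ico 0 sstar))
        rwa [hsq, sub_sub_cancel, sqrt_sq hc0.le, hcL] at h
      · filter_upwards [self_mem_nhdsWithin] with s hs using hθlow s hs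
    refine tendsto_atBot_mono' _ ?_ (tendsto_tan_nhdsGT_pi_div_two.comp hθ)
    filter_upwards [self_mem_nhdsWithin] with s hs
    have hMs : 0 < M - s := by linarith [hs.2]
    have ha : 1 ≤ √((M + s) / (M - s)) := by
      rw [one_le_sqrt, one_le_div hMs]
      linarith [hs.1]
    have := htneg s hs
    change √((M + s) / (M - s)) * _ ≤ tan (√(M ^ 2 - s ^ 2) * L)
    nlinarith
  have hcont : ContinuousOn F (Ico 0 sstar) := by
    intro s hs
    have hMs : M - s ≠ 0 := by linarith [hs.2]
    have hcos : cos (√(M ^ 2 - s ^ 2) * L) ≠ 0 :=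
      (cos_neg_of_pi_div_two_lt_of_lt (hθlow s hs) (by linarith [hθup s])).ne
    have ha : ContinuousAt (fun s => √((M + s) / (M - s))) s :=
      ContinuousAt.sqrt (ContinuousAt.div (by fun_prop) (by fun_prop) hMs)
    have hb : ContinuousAt (fun s => √(M ^ 2 - s ^ 2) * L) s := by fun_prop
    have ht : ContinuousAt (fun s => tan (√(M ^ 2 - s ^ 2) * L)) s :=
      ContinuousAt.comp (f := fun s => √(M ^ 2 - s ^ 2) * L) (continuousAt_tan.2 hcos) hb
    exact (ha.mul ht).continuousWithinAt
  have h0mem : (0 : ℝ) ∈ Ico 0 sstar := ⟨le_rfl, hs0⟩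
  refine ⟨hs0, hanti, hF0, htan, htend, ?_, hanti.injOn, ?_⟩
  · intro s hs
    rw [mem_Iic, ← hF0]
    exact hanti.antitoneOn h0mem hs hs.1
  · intro y hy
    rw [mem_Iic, ← hF0] at hy
    have hne : (𝓝[Ico 0 sstar] sstar).NeBot := by
      rw [← mem_closure_iff_nhdsWithin_neBot, closure_Ico hs0.ne]
      exact ⟨hs0.le, le_rfl⟩
    obtain ⟨s₁, hs₁, hy₁⟩ :=
      (eventually_mem_nhdsWithin.and (htend.eventually (eventually_le_atBot y))).exists
    have hsub : Icc 0 s₁ ⊆ Ico 0 sstar := fun x hx => ⟨hx.1, hx.2.trans_lt hs₁.2⟩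
    obtain ⟨x, hx, hxy⟩ :=
      intermediate_value_Icc' hs₁.1 (hcont.mono hsub) ⟨hy₁, hy⟩
    exact ⟨x, hsub hx, hxy⟩
end

section
/- Let M > 0 and L > 0 with M·L ∈ (3π/4, π), and let k̂ > 0. Set s* = √(M² − (π/(2L))²). Then there exist σ₀ ∈ (0, s*) and τ̄ > 0 such that for every τ ≥ τ̄ and every k ∈ (−k̂, k̂) there exists σ ∈ [σ₀, s*) with H(σ, k, τ) = 0, where H(σ,k,τ) = (σ+M)·tan(√(M²−σ²)·L)/√(M²−σ²) − (k·e^{−στ} − 1)/(k·e^{−στ} + 1). Consequently, for τ sufficiently large, no feedback gain k ∈ (−k̂, k̂) renders the delayed closed-loop Bastin–Coron system exponentially stable, since each zero σ of H yields a classical solution growing like e^{σt}. -/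
/-!
Write `ω = √(M² - σ²)` and `x = k e^{-στ}`. Since `ωL ∈ (π/2, π)` on `(0, s*)`, clearing the
denominators `ω > 0`, `cos (ωL) < 0` and `x + 1 > 0` turns `H = 0` into `N σ + x * B σ = 0`, where
`N σ = (σ + M) sin (ωL) + ω cos (ωL)` and `B σ = (σ + M) sin (ωL) - ω cos (ωL)`; unlike `H`, this
expression is continuous up to and including `s*`.

At the ends, `N 0 = M (sin (ML) + cos (ML)) < 0` because `ML ∈ (3π/4, π)`, and `N s* = s* + M > 0`
because `ωL = π/2` there. By continuity there are `0 < σ₀ < σ₁ < s*` with `N σ₀ < 0 < N σ₁`. For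
large `τ` the perturbation `x * B σ` is, uniformly in `σ ≥ σ₀` and `|k| < k̂`, too small to alter
these signs, and the intermediate value theorem gives a root in `[σ₀, σ₁]`.
-/

open Real in
/-- `sin y + cos y = √2 sin (y + π/4)` is negative for `y` between `3π/4` and `π`. -/
lemma sin_add_cos_neg {y : ℝ} (h1 : 3 * π / 4 < y) (h2 : y < π) : sin y + cos y < 0 := by
  have hpi := pi_pos
  have h : 0 < sin (y - 3 * π / 4) := sin_pos_of_pos_of_lt_pi (by linarith) (by linarith)
  have e : y - 3 * π / 4 = (y + π / 4) - π := by ring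
  rw [e, sin_sub_pi, sin_add, sin_pi_div_four, cos_pi_div_four] at h
  have h2 : 0 < √2 := by positivity
  nlinarith

/-- The characteristic equation follows from its form with denominators cleared. -/
lemma char_eq_of_cleared {a w s c x : ℝ} (hw : w ≠ 0) (hc : c ≠ 0) (hx : x + 1 ≠ 0)
    (h : (a * s + w * c) + x * (a * s - w * c) = 0) :
    a * (s / c) / w - (x - 1) / (x + 1) = 0 := by
  field_simp
  linarith

/-- For `ML ∈ (3π/4, π)` and any gain bound `k̂ > 0`, there are `σ₀ ∈ (0, s*)` and a
delay threshold `τ̄ > 0` such that for every delay `τ ≥ τ̄` and every feedback gain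
`k ∈ (−k̂, k̂)` the characteristic equation `H(σ, k, τ) = 0` has a root
`σ ∈ [σ₀, s*)`; such a root yields a classical solution of the delayed closed-loop
Bastin–Coron system growing like `e^{σt}`, so no such gain stabilizes the system. -/
theorem bastin_coron_delay_destabilizes
    (L M khat : ℝ) (hL : 0 < L) (hM : 0 < M) (hkhat : 0 < khat)
    (hML : M * L ∈ Set.Ioo (3 * Real.pi / 4) Real.pi) :
    let sstar : ℝ := Real.sqrt (M ^ 2 - (Real.pi / (2 * L)) ^ 2)
    let H : ℝ → ℝ → ℝ → ℝ := fun σ k τ =>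
      (σ + M) * Real.tan (Real.sqrt (M ^ 2 - σ ^ 2) * L) / Real.sqrt (M ^ 2 - σ ^ 2)
        - (k * Real.exp (-σ * τ) - 1) / (k * Real.exp (-σ * τ) + 1)
    ∃ σ₀ ∈ Set.Ioo 0 sstar, ∃ τbar > (0 : ℝ),
      ∀ τ ≥ τbar, ∀ k ∈ Set.Ioo (-khat) khat,
        ∃ σ ∈ Set.Ico σ₀ sstar, H σ k τ = 0 := by
  intro sstar H
  obtain ⟨hML1, hML2⟩ := hML
  have hpi := Real.pi_pos
  have hq : 0 < Real.pi / (2 * L) := by positivity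
  have hqL : Real.pi / (2 * L) * L = Real.pi / 2 := by field_simp
  have hqM : Real.pi / (2 * L) < M := by
    rw [div_lt_iff₀ (by positivity)]; linarith
  have hs2 : 0 < M ^ 2 - (Real.pi / (2 * L)) ^ 2 := by nlinarith
  have hs : 0 < sstar := Real.sqrt_pos.2 hs2
  have hssq : sstar ^ 2 = M ^ 2 - (Real.pi / (2 * L)) ^ 2 := Real.sq_sqrt hs2.le
  have hsM : sstar < M := by nlinarith
  set w : ℝ → ℝ := fun σ => Real.sqrt (M ^ 2 - σ ^ 2) with hw
  set N : ℝ → ℝ := fun σ => (σ + M) * Real.sin (w σ * L) + w σ * Real.cos (w σ * L) with hN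
  set B : ℝ → ℝ := fun σ => (σ + M) * Real.sin (w σ * L) - w σ * Real.cos (w σ * L) with hB
  have hwc : Continuous w := by fun_prop
  have hNc : Continuous N := by fun_prop
  have hBc : Continuous B := by fun_prop
  have hw0 : w 0 = M := by simp [hw, Real.sqrt_sq hM.le]
  have hws : w sstar = Real.pi / (2 * L) := by
    simp only [hw, hssq, sub_sub_cancel]
    exact Real.sqrt_sq hq.le
  have hN0 : N 0 < 0 := by
    have := sin_add_cos_neg hML1 hML2
    simp only [hN, hw0]
    nlinarith
  have hNs : 0 < N sstar := by
    simp only [hN, hws, hqL, Real.sin_pi_div_two, Real.cos_pi_div_two]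
    linarith
  have hwle : ∀ σ, w σ ≤ M := fun σ => Real.sqrt_le_iff.2 ⟨hM.le, by nlinarith [sq_nonneg σ]⟩
  have hwgt : ∀ σ, 0 < σ → σ < sstar → Real.pi / (2 * L) < w σ := fun σ h0 h1 =>
    Real.lt_sqrt_of_sq_lt (by nlinarith)
  have hBbd : ∀ σ, 0 < σ → σ < sstar → |B σ| ≤ 3 * M := by
    intro σ h0 h1
    have h2 := hwle σ
    have h3 := hwgt σ h0 h1
    calc |B σ| ≤ |(σ + M) * Real.sin (w σ * L)| + |w σ * Real.cos (w σ * L)| := abs_sub _ _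
      _ = (σ + M) * |Real.sin (w σ * L)| + w σ * |Real.cos (w σ * L)| := by
        rw [abs_mul, abs_mul, abs_of_pos (by linarith : 0 < σ + M),
          abs_of_pos (by linarith : 0 < w σ)]
      _ ≤ (σ + M) * 1 + w σ * 1 := by
        gcongr
        · exact Real.abs_sin_le_one _
        · exact Real.abs_cos_le_one _
      _ ≤ 3 * M := by linarith
  obtain ⟨σ₀, ⟨h00, h0s⟩, hNσ₀⟩ : ∃ σ₀ ∈ Set.Ioo 0 sstar, N σ₀ < 0 := by
    have h1 : ∀ᶠ σ in nhdsWithin 0 (Set.Ioi 0), N σ < 0 :=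
      (hNc.continuousAt.eventually_lt_const hN0).filter_mono nhdsWithin_le_nhds
    obtain ⟨σ, h, h'⟩ := (h1.and (Ioo_mem_nhdsGT hs)).exists
    exact ⟨σ, h', h⟩
  obtain ⟨σ₁, ⟨h01, h1s⟩, hNσ₁⟩ : ∃ σ₁ ∈ Set.Ioo σ₀ sstar, 0 < N σ₁ := by
    have h1 : ∀ᶠ σ in nhdsWithin sstar (Set.Iio sstar), 0 < N σ :=
      (hNc.continuousAt.eventually_const_lt hNs).filter_mono nhdsWithin_le_nhds
    obtain ⟨σ, h, h'⟩ := (h1.and (Ioo_mem_nhdsLT h0s)).exists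
    exact ⟨σ, h', h⟩
  -- The bound on `|x|` below keeps `x + 1` positive and the signs at `σ₀`, `σ₁` unchanged.
  obtain ⟨ε, hε, hε1, hε0, hεN⟩ : ∃ ε > 0, ε ≤ 1 ∧ ε * (3 * M) ≤ -N σ₀ ∧ ε * (3 * M) ≤ N σ₁ := by
    have h3 : 0 < 3 * M := by positivity
    refine ⟨min 1 (min (-N σ₀ / (3 * M)) (N σ₁ / (3 * M))), ?_, min_le_left _ _, ?_, ?_⟩
    · have : 0 < -N σ₀ := by linarith
      positivity
    · rw [← le_div_iff₀ h3]
      exact (min_le_right _ _).trans (min_le_left _ _)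
    · rw [← le_div_iff₀ h3]
      exact (min_le_right _ _).trans (min_le_right _ _)
  obtain ⟨T, hT⟩ : ∃ T, ∀ τ ≥ T, khat * Real.exp (-σ₀ * τ) < ε := by
    have h1 : Filter.Tendsto (fun τ => khat * Real.exp (-σ₀ * τ)) Filter.atTop (nhds 0) := by
      have h2 := (Real.tendsto_exp_atBot.comp
        (Filter.tendsto_id.const_mul_atTop_of_neg (neg_lt_zero.2 h00))).const_mul khat
      simpa using h2
    exact Filter.eventually_atTop.1 (h1.eventually_lt_const hε)
  refine ⟨σ₀, ⟨h00, h0s⟩, max T 1, by positivity, fun τ hτ k hk => ?_⟩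
  have hτT : T ≤ τ := (le_max_left _ _).trans hτ
  have hτ0 : 0 < τ := lt_of_lt_of_le one_pos ((le_max_right _ _).trans hτ)
  have hx : ∀ σ, σ₀ ≤ σ → |k * Real.exp (-σ * τ)| < ε := by
    intro σ hσ
    refine lt_of_le_of_lt ?_ (hT τ hτT)
    rw [abs_mul, Real.abs_exp]
    have : |k| ≤ khat := (abs_lt.2 hk).le
    gcongr
  have hpert : ∀ σ, σ₀ ≤ σ → σ < sstar → |k * Real.exp (-σ * τ) * B σ| ≤ ε * (3 * M) := by
    intro σ hσ hσs
    rw [abs_mul]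
    exact mul_le_mul (hx σ hσ).le (hBbd σ (by linarith) hσs) (abs_nonneg _) hε.le
  obtain ⟨σ, ⟨hσ0, hσ1⟩, hσ⟩ : ∃ σ ∈ Set.Icc σ₀ σ₁, N σ + k * Real.exp (-σ * τ) * B σ = 0 := by
    have hc : Continuous fun σ => N σ + k * Real.exp (-σ * τ) * B σ := by fun_prop
    refine intermediate_value_Icc h01.le hc.continuousOn ⟨?_, ?_⟩
    · have := (abs_le.1 (hpert σ₀ le_rfl h0s)).2
      linarith
    · have := (abs_le.1 (hpert σ₁ h01.le h1s)).1
      linarith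
  have hσs : σ < sstar := by linarith
  have hwσ := hwgt σ (by linarith) hσs
  have hcos : Real.cos (w σ * L) < 0 := by
    apply Real.cos_neg_of_pi_div_two_lt_of_lt
    · rw [← hqL]
      gcongr
    · have : w σ * L ≤ M * L := by
        gcongr
        exact hwle σ
      linarith
  have hx1 : k * Real.exp (-σ * τ) + 1 ≠ 0 := by
    have := (abs_lt.1 (hx σ hσ0)).1
    linarith
  refine ⟨σ, ⟨hσ0, hσs⟩, ?_⟩
  have := char_eq_of_cleared (hq.trans hwσ).ne' hcos.ne hx1 hσ
  rw [← Real.tan_eq_sin_div_cos] at this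
  exact this
end
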